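/- Under the hypotheses of the main gradient-feedback stability theorem (plant f with Lyapunov function W and constants γ, ζ; Φ continuously differentiable with u ↦ Φ(h(u),u) having compact sublevel sets and satisfying the L-bound; metric Q with sup_u ‖Q(u)‖ < γ/(ζL)), if in addition Φ : ℝⁿ × ℝᵖ → ℝ is convex and the steady-state map h is affine (h(u) = H₀u + r for a linear map H₀ and vector r), then every complete solution of ẋ = f(x,u), u̇ = −Q(u)H(u)ᵀ∇Φ(x,u) converges to the set of global minimizers of min{Φ(x,u) : x = h(u)}. -/

import Mathlib

open Filter Metric Real
open scoped RealInnerProductSpace Topology NNReal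

/-
The function `V(x, u) = (L / ζ) W(x, u) + Φ(h(u), u)` decreases along the closed loop. With
`g = H(u)ᵀ∇Φ(x, u)`, `e = ‖x - h(u)‖` and `σ² = ⟪Q(u) g, g⟫`, the estimate `‖Q(u) g‖ ≤ √q σ` for
`q ≥ ‖Q(u)‖` turns both cross terms of `V̇` into `L √q e σ`, and completing the square gives

  `V̇ ≤ -(L / ζ) (γ - ζ L q) e² - (σ - L √q e)²`.

The right-hand side is negative off `e = σ = 0` exactly because `q < γ / (ζ L)`. Sublevel sets of
`V` are compact, so an integral form of LaSalle's argument (Barbalat's lemma) drives the trajectory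
to `{x = h(u), H(u)ᵀ∇Φ(x, u) = 0}`. There `H(u)ᵀ∇Φ(h(u), u)` is the gradient of the reduced cost
`u ↦ Φ(h(u), u)`, so convexity of the reduced cost makes these points the global minimizers.
-/

section Barbalat

theorem sub_le_mul_sub_of_hasDerivAt_le {v v' : ℝ → ℝ} {a b C : ℝ}
    (hv : ∀ t ∈ Set.Icc a b, HasDerivAt v (v' t) t) (hC : ∀ t ∈ Set.Icc a b, v' t ≤ C)
    (hab : a ≤ b) : v b - v a ≤ C * (b - a) := by
  refine (convex_Icc a b).image_sub_le_mul_sub_of_deriv_le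
    (fun t ht => (hv t ht).continuousAt.continuousWithinAt)
    (fun t ht => (hv t (interior_subset ht)).differentiableAt.differentiableWithinAt)
    (fun t ht => ?_) a (Set.left_mem_Icc.2 hab) b (Set.right_mem_Icc.2 hab) hab
  rw [(hv t (interior_subset ht)).deriv]
  exact hC t (interior_subset ht)

theorem exists_tendsto_atTop_of_antitoneOn_Ici {v : ℝ → ℝ} {a m : ℝ} (hv : AntitoneOn v (Set.Ici a))
    (hm : ∀ t ≥ a, m ≤ v t) : ∃ l, Tendsto v atTop (𝓝 l) := by
  have hanti : Antitone fun t => v (max t a) := fun s t hst =>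
    hv (le_max_right s a) (le_max_right t a) (max_le_max_right a hst)
  have hbdd : BddBelow (Set.range fun t => v (max t a)) :=
    ⟨m, Set.forall_mem_range.2 fun t => hm _ (le_max_right t a)⟩
  refine ⟨_, (tendsto_atTop_ciInf hanti hbdd).congr' ?_⟩
  filter_upwards [eventually_ge_atTop a] with t ht
  rw [max_eq_left ht]

/-- **Barbalat's lemma**, with the integrability of `g` witnessed by `v`. -/
theorem tendsto_zero_of_hasDerivAt_le_neg {v v' g : ℝ → ℝ} {m : ℝ}
    (hv : ∀ t ≥ 0, HasDerivAt v (v' t) t) (hvg : ∀ t ≥ 0, v' t ≤ -g t) (hm : ∀ t ≥ 0, m ≤ v t)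
    (hg0 : ∀ t ≥ 0, 0 ≤ g t) (hg : UniformContinuousOn g (Set.Ici 0)) :
    Tendsto g atTop (𝓝 0) := by
  have hanti : AntitoneOn v (Set.Ici 0) := fun s hs t _ hst => by
    have := sub_le_mul_sub_of_hasDerivAt_le (C := 0) (fun r hr => hv r (hs.trans hr.1))
      (fun r hr => (hvg r (hs.trans hr.1)).trans (neg_nonpos.2 (hg0 r (hs.trans hr.1)))) hst
    linarith
  obtain ⟨l, hl⟩ := exists_tendsto_atTop_of_antitoneOn_Ici hanti hm
  refine Metric.tendsto_nhds.2 fun ε hε => ?_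
  obtain ⟨τ, hτ, hgτ⟩ := Metric.uniformContinuousOn_iff_le.1 hg (ε / 2) (half_pos hε)
  have hdrop : Tendsto (fun t => v t - v (t + τ)) atTop (𝓝 0) := by
    simpa using hl.sub (hl.comp (tendsto_atTop_add_const_right _ τ tendsto_id))
  filter_upwards [hdrop.eventually_lt_const (mul_pos (half_pos hε) hτ), eventually_ge_atTop 0]
    with t htτ ht
  rw [dist_zero_right, norm_of_nonneg (hg0 t ht)]
  by_contra! hεt
  have hgs : ∀ s ∈ Set.Icc t (t + τ), ε / 2 ≤ g s := fun s hs => by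
    have := hgτ t ht s (ht.trans hs.1) (by rw [dist_comm, dist_eq, abs_le]; grind)
    rw [dist_eq, abs_le] at this
    linarith
  have := sub_le_mul_sub_of_hasDerivAt_le (C := -(ε / 2)) (fun s hs => hv s (ht.trans hs.1))
    (fun s hs => (hvg s (ht.trans hs.1)).trans (neg_le_neg (hgs s hs)))
    (le_add_of_nonneg_right hτ.le)
  linarith

end Barbalat

section LaSalle

theorem tendsto_infDist_of_tendsto_apply {X Y ι : Type*} [PseudoMetricSpace X] [TopologicalSpace Y]
    [T2Space Y] {K Z : Set X} {D : X → Y} {y : Y} {l : Filter ι} {z : ι → X} (hK : IsCompact K)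
    (hD : ContinuousOn D K) (hZ : ∀ k ∈ K, D k = y → k ∈ Z) (hzK : ∀ᶠ t in l, z t ∈ K)
    (hDz : Tendsto (fun t => D (z t)) l (𝓝 y)) :
    Tendsto (fun t => infDist (z t) Z) l (𝓝 0) := by
  refine Metric.tendsto_nhds.2 fun ε hε => ?_
  have hfar : IsCompact (K ∩ {k | ε ≤ infDist k Z}) :=
    hK.inter_right (isClosed_le continuous_const (continuous_infDist_pt Z))
  have hy : y ∉ D '' (K ∩ {k | ε ≤ infDist k Z}) := by
    rintro ⟨k, ⟨hkK, hkε⟩, hky⟩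
    exact hε.not_ge (hkε.trans_eq (infDist_zero_of_mem (hZ k hkK hky)))
  have hclosed := (hfar.image_of_continuousOn (hD.mono Set.inter_subset_left)).isClosed
  filter_upwards [hzK, hDz.eventually (hclosed.isOpen_compl.mem_nhds hy)] with t htK htD
  rw [dist_zero_right, norm_of_nonneg infDist_nonneg]
  by_contra! htε
  exact htD ⟨z t, ⟨htK, htε⟩, rfl⟩

variable {E : Type*} [NormedAddCommGroup E] [NormedSpace ℝ E]

theorem uniformContinuousOn_Ici_of_hasDerivAt {K : Set E} {X : E → E} {z : ℝ → E} {a : ℝ}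
    (hK : IsCompact K) (hX : ContinuousOn X K) (hz : ∀ t ≥ a, HasDerivAt z (X (z t)) t)
    (hzK : ∀ t ≥ a, z t ∈ K) : UniformContinuousOn z (Set.Ici a) := by
  obtain ⟨M, hM⟩ := hK.exists_bound_of_continuousOn hX
  refine ((convex_Ici a).lipschitzOnWith_of_nnnorm_hasDerivWithin_le (C := M.toNNReal)
    (fun t ht => (hz t ht).hasDerivWithinAt) fun t ht => ?_).uniformContinuousOn
  exact (hM _ (hzK t ht)).trans M.le_coe_toNNReal

theorem apply_le_of_fderiv_nonpos {X : E → E} {V : E → ℝ} {z : ℝ → E} (hV : Differentiable ℝ V)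
    (hVX : ∀ k, fderiv ℝ V k (X k) ≤ 0) (hz : ∀ t ≥ 0, HasDerivAt z (X (z t)) t) {t : ℝ}
    (ht : 0 ≤ t) : V (z t) ≤ V (z 0) := by
  simpa using sub_le_mul_sub_of_hasDerivAt_le (C := 0)
    (fun s hs => (hV (z s)).hasFDerivAt.comp_hasDerivAt s (hz s hs.1)) (fun s _ => hVX (z s)) ht

theorem tendsto_infDist_zeros_of_fderiv_le_neg {X : E → E} {V D : E → ℝ} {z : ℝ → E}
    (hX : Continuous X) (hV : Differentiable ℝ V) (hVc : ∀ c, IsCompact {k | V k ≤ c})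
    (hD : Continuous D) (hD0 : ∀ k, 0 ≤ D k) (hVD : ∀ k, fderiv ℝ V k (X k) ≤ -D k)
    (hz : ∀ t ≥ 0, HasDerivAt z (X (z t)) t) :
    Tendsto (fun t => infDist (z t) {k | D k = 0}) atTop (𝓝 0) := by
  have hK := hVc (V (z 0))
  have hzK : ∀ t ≥ 0, z t ∈ {k | V k ≤ V (z 0)} := fun t ht =>
    apply_le_of_fderiv_nonpos hV (fun k => (hVD k).trans (neg_nonpos.2 (hD0 k))) hz ht
  obtain ⟨m, hm⟩ := hK.bddBelow_image hV.continuous.continuousOn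
  have hDz : Tendsto (fun t => D (z t)) atTop (𝓝 0) :=
    tendsto_zero_of_hasDerivAt_le_neg
      (fun t ht => (hV (z t)).hasFDerivAt.comp_hasDerivAt t (hz t ht)) (fun t _ => hVD (z t))
      (fun t ht => hm ⟨z t, hzK t ht, rfl⟩) (fun t _ => hD0 (z t))
      ((hK.uniformContinuousOn_of_continuous hD.continuousOn).comp
        (uniformContinuousOn_Ici_of_hasDerivAt hK hX.continuousOn hz hzK) hzK)
  exact tendsto_infDist_of_tendsto_apply hK hD.continuousOn (fun k _ hk => hk)
    ((eventually_ge_atTop 0).mono hzK) hDz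

end LaSalle

section Convex

variable {F : Type*} [NormedAddCommGroup F]

theorem convexOn_univ_forall_le_iff_fderiv_eq_zero [NormedSpace ℝ F] {φ : F → ℝ} {φ' : F →L[ℝ] ℝ}
    {u : F} (hφ : ConvexOn ℝ Set.univ φ) (hu : HasFDerivAt φ φ' u) :
    (∀ w, φ u ≤ φ w) ↔ φ' = 0 := by
  refine ⟨fun hmin => IsLocalMin.hasFDerivAt_eq_zero (Eventually.of_forall hmin) hu, ?_⟩
  rintro rfl w
  have hline : HasDerivAt (φ ∘ AffineMap.lineMap u w) 0 (0 : ℝ) :=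
    HasFDerivAt.comp_hasDerivAt (l := φ) (l' := 0) (0 : ℝ)
      (by rwa [AffineMap.lineMap_apply_zero]) AffineMap.hasDerivAt_lineMap
  have hslope := (hφ.comp_affineMap (AffineMap.lineMap u w)).le_slope_of_hasDerivAt
    (Set.mem_univ 0) (Set.mem_univ 1) one_pos hline
  simpa [slope_def_field] using hslope

theorem convexOn_univ_forall_le_iff_gradient_eq_zero [InnerProductSpace ℝ F] [CompleteSpace F]
    {φ : F → ℝ} {g u : F} (hφ : ConvexOn ℝ Set.univ φ) (hu : HasGradientAt φ g u) :
    (∀ w, φ u ≤ φ w) ↔ g = 0 :=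
  (convexOn_univ_forall_le_iff_fderiv_eq_zero hφ hu.hasFDerivAt).trans
    (map_eq_zero_iff _ (LinearIsometryEquiv.injective _))

end Convex

section InnerProduct

variable {F : Type*} [NormedAddCommGroup F] [InnerProductSpace ℝ F]

theorem inner_neg_right_le (g g₀ w : F) : ⟪g₀, -w⟫ ≤ -⟪w, g⟫ + ‖g - g₀‖ * ‖w‖ :=
  calc ⟪g₀, -w⟫ = -⟪w, g⟫ + ⟪g - g₀, w⟫ := by
        rw [inner_neg_right, inner_sub_left, real_inner_comm g]; ring
    _ ≤ -⟪w, g⟫ + ‖g - g₀‖ * ‖w‖ := by gcongr; exact real_inner_le_norm _ _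

theorem isPositive_of_isSymmetric_of_inner_pos {T : F →L[ℝ] F}
    (hT : T.toLinearMap.IsSymmetric) (hpos : ∀ v, v ≠ 0 → 0 < ⟪T v, v⟫) : T.IsPositive := by
  refine ⟨hT, fun v => ?_⟩
  obtain rfl | hv := eq_or_ne v 0
  · simp [ContinuousLinearMap.reApplyInnerSelf_apply]
  · exact (hpos v hv).le

theorem norm_apply_sq_le_of_isPositive {T : F →L[ℝ] F} (hT : T.IsPositive) (g : F) :
    ‖T g‖ ^ 2 ≤ ‖T‖ * ⟪T g, g⟫ := by
  have hcs : (‖T g‖ ^ 2) ^ 2 ≤ ⟪T g, g⟫ * ⟪T (T g), T g⟫ := by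
    have := LinearMap.BilinForm.apply_sq_le_of_symm ((innerₗ F).comp T.toLinearMap)
      hT.inner_nonneg_left
      ⟨fun v w => (hT.inner_left_eq_inner_right v w).trans (real_inner_comm _ _)⟩ g (T g)
    simpa using this
  have hTT : ⟪T (T g), T g⟫ ≤ ‖T‖ * ‖T g‖ ^ 2 :=
    calc ⟪T (T g), T g⟫ ≤ ‖T (T g)‖ * ‖T g‖ := real_inner_le_norm _ _
      _ ≤ ‖T‖ * ‖T g‖ * ‖T g‖ := by gcongr; exact T.le_opNorm _
      _ = ‖T‖ * ‖T g‖ ^ 2 := by ring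
  rcases (sq_nonneg ‖T g‖).eq_or_lt with h0 | hpos
  · rw [← h0]
    exact mul_nonneg (norm_nonneg T) (hT.inner_nonneg_left g)
  · refine le_of_mul_le_mul_right ?_ hpos
    nlinarith [mul_le_mul_of_nonneg_left hTT (hT.inner_nonneg_left g)]

end InnerProduct

section PartialGradient

variable {E F : Type*} [NormedAddCommGroup E] [InnerProductSpace ℝ E] [CompleteSpace E]
  [NormedAddCommGroup F] [InnerProductSpace ℝ F] [CompleteSpace F]

theorem fderiv_uncurry_apply_eq_inner_gradient {Ψ : E → F → ℝ} {x : E} {u : F}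
    (hΨ : DifferentiableAt ℝ (Function.uncurry Ψ) (x, u)) (a : E) (b : F) :
    fderiv ℝ (Function.uncurry Ψ) (x, u) (a, b) =
      ⟪gradient (fun y => Ψ y u) x, a⟫ + ⟪gradient (fun v => Ψ x v) u, b⟫ := by
  have hx : HasFDerivAt (fun y => Ψ y u) _ x :=
    hΨ.hasFDerivAt.comp (f := fun y => (y, u)) x (hasFDerivAt_prodMk_left x u)
  have hu : HasFDerivAt (fun v => Ψ x v) _ u :=
    hΨ.hasFDerivAt.comp (f := fun v => (x, v)) u (hasFDerivAt_prodMk_right x u)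
  rw [inner_gradient_left, inner_gradient_left, hx.fderiv, hu.fderiv]
  simp [← map_add]

/-- The feedback signal `H(u)ᵀ∇Φ(x, u) = Dh(u)ᵀ∇ₓΦ(x, u) + ∇ᵤΦ(x, u)`, the gradient of the reduced
cost `w ↦ Φ(h(w), w)` with the steady state `h(u)` replaced by the measured state `x`. -/
noncomputable def feedbackGradient (h : F → E) (Φ : E → F → ℝ) (x : E) (u : F) : F :=
  ContinuousLinearMap.adjoint (fderiv ℝ h u) (gradient (fun y => Φ y u) x) +
    gradient (fun v => Φ x v) u

variable {h : F → E} {Φ : E → F → ℝ}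

theorem inner_feedbackGradient {x : E} {u : F}
    (hΦ : DifferentiableAt ℝ (Function.uncurry Φ) (x, u)) (v : F) :
    ⟪feedbackGradient h Φ x u, v⟫ = fderiv ℝ (Function.uncurry Φ) (x, u) (fderiv ℝ h u v, v) := by
  rw [feedbackGradient, inner_add_left, ContinuousLinearMap.adjoint_inner_left,
    fderiv_uncurry_apply_eq_inner_gradient hΦ]

theorem feedbackGradient_sub (x x' : E) (u : F) :
    feedbackGradient h Φ x' u - feedbackGradient h Φ x u =
      ContinuousLinearMap.adjoint (fderiv ℝ h u)
          (gradient (fun y => Φ y u) x' - gradient (fun y => Φ y u) x) +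
        (gradient (fun v => Φ x' v) u - gradient (fun v => Φ x v) u) := by
  rw [feedbackGradient, feedbackGradient, map_sub]
  abel

theorem hasGradientAt_reducedCost {u : F} (hh : DifferentiableAt ℝ h u)
    (hΦ : DifferentiableAt ℝ (Function.uncurry Φ) (h u, u)) :
    HasGradientAt (fun w => Φ (h w) w) (feedbackGradient h Φ (h u) u) u := by
  rw [hasGradientAt_iff_hasFDerivAt]
  refine (hΦ.hasFDerivAt.comp (f := fun w => (h w, w)) u
    (hh.hasFDerivAt.prodMk (hasFDerivAt_id u))).congr_fderiv ?_
  ext v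
  simp [inner_feedbackGradient hΦ]

theorem continuous_feedbackGradient (hh : ContDiff ℝ 1 h) (hΦ : ContDiff ℝ 1 (Function.uncurry Φ)) :
    Continuous fun z : E × F => feedbackGradient h Φ z.1 z.2 := by
  have hΦ' : Continuous (fderiv ℝ (Function.uncurry Φ)) := hΦ.continuous_fderiv one_ne_zero
  have hh' : Continuous (fderiv ℝ h) := hh.continuous_fderiv one_ne_zero
  have hdual : (fun z : E × F => feedbackGradient h Φ z.1 z.2) = fun z =>
      (InnerProductSpace.toDual ℝ F).symm ((fderiv ℝ (Function.uncurry Φ) z).comp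
        ((ContinuousLinearMap.inl ℝ E F).comp (fderiv ℝ h z.2) +
          ContinuousLinearMap.inr ℝ E F)) := by
    ext1 z
    refine ext_inner_right ℝ fun v => ?_
    simp [inner_feedbackGradient (hΦ.differentiable one_ne_zero _), ← map_add]
  rw [hdual]
  exact (LinearIsometryEquiv.continuous _).comp (hΦ'.clm_comp
    ((continuous_const.clm_comp (hh'.comp continuous_snd)).add continuous_const))

end PartialGradient

section CompositeLyapunov

theorem isCompact_sublevel_add {E F : Type*} [NormedAddCommGroup E] [ProperSpace E]
    [TopologicalSpace F] {h : F → E} {W : E × F → ℝ} {φ : F → ℝ} {a : ℝ} (ha : 0 < a)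
    (hh : Continuous h) (hW : Continuous W) (hφ : Continuous φ)
    (hWlb : ∀ z, a * ‖z.1 - h z.2‖ ^ 2 ≤ W z) (hφc : ∀ c, IsCompact {u | φ u ≤ c}) (c : ℝ) :
    IsCompact {z : E × F | W z + φ z.2 ≤ c} := by
  obtain ⟨m, hm⟩ := (hφc c).bddBelow_image hφ.continuousOn
  refine ((((isCompact_closedBall 0 √((c - m) / a)).prod (hφc c)).image
    (f := fun z : E × F => (z.1 + h z.2, z.2)) (by fun_prop))).of_isClosed_subset
    (isClosed_le (by fun_prop) continuous_const) fun z (hz : W z + φ z.2 ≤ c) => ?_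
  have hWz := hWlb z
  have hφz : φ z.2 ≤ c := by
    have : 0 ≤ a * ‖z.1 - h z.2‖ ^ 2 := by positivity
    linarith
  have hmz : m ≤ φ z.2 := hm ⟨z.2, hφz, rfl⟩
  refine ⟨(z.1 - h z.2, z.2), ⟨?_, hφz⟩, by simp⟩
  rw [mem_closedBall_zero_iff]
  refine le_sqrt_of_sq_le ((le_div_iff₀' ha).2 ?_)
  linarith

/-- The function `κ W(x, u) + Φ(h(u), u)`: the plant Lyapunov function, weighted by `κ`, plus the
reduced cost. -/
def compositeLyapunov {E F : Type*} (h : F → E) (W Φ : E → F → ℝ) (κ : ℝ) (z : E × F) : ℝ :=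
  κ * Function.uncurry W z + Φ (h z.2) z.2

theorem differentiable_compositeLyapunov {E F : Type*} [NormedAddCommGroup E] [NormedSpace ℝ E]
    [NormedAddCommGroup F] [NormedSpace ℝ F] {h : F → E} {W Φ : E → F → ℝ}
    (hh : Differentiable ℝ h) (hW : Differentiable ℝ (Function.uncurry W))
    (hΦ : Differentiable ℝ (Function.uncurry Φ)) (κ : ℝ) :
    Differentiable ℝ (compositeLyapunov h W Φ κ) :=
  (hW.const_mul κ).add (hΦ.comp ((hh.comp differentiable_snd).prodMk differentiable_snd))

variable {E F : Type*} [NormedAddCommGroup E] [InnerProductSpace ℝ E] [CompleteSpace E]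
  [NormedAddCommGroup F] [InnerProductSpace ℝ F] [CompleteSpace F]

/-- The closed-loop vector field on `(x, u)`: the plant `f` together with the feedback law
`u̇ = -Q(u)H(u)ᵀ∇Φ(x, u)`. -/
noncomputable def gradientFeedbackField (f : E → F → E) (h : F → E) (Φ : E → F → ℝ)
    (Q : F → F →L[ℝ] F) (z : E × F) : E × F :=
  (f z.1 z.2, -Q z.2 (feedbackGradient h Φ z.1 z.2))

/-- A lower bound for the decay rate of `compositeLyapunov` with weight `L / ζ` along
`gradientFeedbackField`, written as a completed square. -/
noncomputable def dissipation (h : F → E) (Φ : E → F → ℝ) (Q : F → F →L[ℝ] F) (γ ζ L q : ℝ)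
    (z : E × F) : ℝ :=
  L / ζ * (γ - ζ * L * q) * ‖z.1 - h z.2‖ ^ 2 +
    (√⟪Q z.2 (feedbackGradient h Φ z.1 z.2), feedbackGradient h Φ z.1 z.2⟫ -
      L * √q * ‖z.1 - h z.2‖) ^ 2

variable {f : E → F → E} {h : F → E} {W Φ : E → F → ℝ} {Q : F → F →L[ℝ] F} {γ ζ L q : ℝ}

theorem fderiv_compositeLyapunov_apply {x : E} {u : F} (hh : DifferentiableAt ℝ h u)
    (hW : DifferentiableAt ℝ (Function.uncurry W) (x, u))
    (hΦ : DifferentiableAt ℝ (Function.uncurry Φ) (h u, u)) (κ : ℝ) (a : E) (b : F) :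
    fderiv ℝ (compositeLyapunov h W Φ κ) (x, u) (a, b) =
      κ * (⟪gradient (fun y => W y u) x, a⟫ + ⟪gradient (fun v => W x v) u, b⟫) +
        ⟪feedbackGradient h Φ (h u) u, b⟫ := by
  have hV : HasFDerivAt (compositeLyapunov h W Φ κ) _ (x, u) :=
    (hW.hasFDerivAt.const_mul κ).add ((hasGradientAt_reducedCost hh hΦ).hasFDerivAt.comp
      (f := Prod.snd) (x, u) hasFDerivAt_snd)
  rw [← fderiv_uncurry_apply_eq_inner_gradient hW, hV.fderiv]
  simp

theorem fderiv_compositeLyapunov_gradientFeedbackField_le (hζ : 0 < ζ) (hL : 0 ≤ L) {z : E × F}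
    (hh : DifferentiableAt ℝ h z.2) (hW : DifferentiableAt ℝ (Function.uncurry W) z)
    (hΦ : DifferentiableAt ℝ (Function.uncurry Φ) (h z.2, z.2))
    (hW_decay : ⟪gradient (fun y => W y z.2) z.1, f z.1 z.2⟫ ≤ -γ * ‖z.1 - h z.2‖ ^ 2)
    (hW_gradu : ‖gradient (fun v => W z.1 v) z.2‖ ≤ ζ * ‖z.1 - h z.2‖)
    (hΦ_lip : ‖feedbackGradient h Φ z.1 z.2 - feedbackGradient h Φ (h z.2) z.2‖ ≤
      L * ‖z.1 - h z.2‖)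
    (hQ : (Q z.2).IsPositive) (hQq : ‖Q z.2‖ ≤ q) :
    fderiv ℝ (compositeLyapunov h W Φ (L / ζ)) z (gradientFeedbackField f h Φ Q z) ≤
      -dissipation h Φ Q γ ζ L q z := by
  obtain ⟨x, u⟩ := z
  dsimp only at *
  set g := feedbackGradient h Φ x u
  set e := ‖x - h u‖
  set σ := √⟪Q u g, g⟫
  have hσ : σ ^ 2 = ⟪Q u g, g⟫ := sq_sqrt (hQ.inner_nonneg_left g)
  have hq : √q ^ 2 = q := sq_sqrt ((norm_nonneg _).trans hQq)
  have hQg : ‖Q u g‖ ≤ √q * σ := by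
    refine abs_le_of_sq_le_sq' ?_ (by positivity) |>.2
    rw [mul_pow, hσ, hq]
    exact (norm_apply_sq_le_of_isPositive hQ g).trans
      (mul_le_mul_of_nonneg_right hQq (hQ.inner_nonneg_left g))
  have hWu : ⟪gradient (fun v => W x v) u, -Q u g⟫ ≤ ζ * e * (√q * σ) := by
    refine (real_inner_le_norm _ _).trans ?_
    rw [norm_neg]
    gcongr
  have hφ : ⟪feedbackGradient h Φ (h u) u, -Q u g⟫ ≤ -σ ^ 2 + L * e * (√q * σ) := by
    refine (inner_neg_right_le g _ _).trans ?_
    rw [hσ]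
    gcongr
  calc fderiv ℝ (compositeLyapunov h W Φ (L / ζ)) (x, u) (f x u, -Q u g)
      = L / ζ * (⟪gradient (fun y => W y u) x, f x u⟫ +
          ⟪gradient (fun v => W x v) u, -Q u g⟫) + ⟪feedbackGradient h Φ (h u) u, -Q u g⟫ :=
        fderiv_compositeLyapunov_apply hh hW hΦ _ _ _
    _ ≤ L / ζ * (-γ * e ^ 2 + ζ * e * (√q * σ)) + (-σ ^ 2 + L * e * (√q * σ)) := by
        gcongr
    _ = -(L / ζ * (γ - ζ * L * √q ^ 2) * e ^ 2 + (σ - L * √q * e) ^ 2) := by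
        field_simp
        ring
    _ = -dissipation h Φ Q γ ζ L q (x, u) := by rw [hq, dissipation]

theorem dissipation_nonneg (hζ : 0 < ζ) (hL : 0 ≤ L) (hq : ζ * L * q ≤ γ) (z : E × F) :
    0 ≤ dissipation h Φ Q γ ζ L q z := by
  have : 0 ≤ γ - ζ * L * q := sub_nonneg.2 hq
  unfold dissipation
  positivity

theorem dissipation_eq_zero_iff (hζ : 0 < ζ) (hL : 0 < L) (hq : ζ * L * q < γ)
    (hQ_pos : ∀ u v, v ≠ 0 → 0 < ⟪Q u v, v⟫) (z : E × F) :
    dissipation h Φ Q γ ζ L q z = 0 ↔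
      z.1 = h z.2 ∧ feedbackGradient h Φ (h z.2) z.2 = 0 := by
  obtain ⟨x, u⟩ := z
  have hc : 0 < L / ζ * (γ - ζ * L * q) := mul_pos (div_pos hL hζ) (sub_pos.2 hq)
  have hQ0 : ∀ g, √⟪Q u g, g⟫ = 0 ↔ g = 0 := fun g => by
    refine ⟨fun h0 => by_contra fun hg => ?_, fun hg => by simp [hg]⟩
    exact (sqrt_pos.2 (hQ_pos u g hg)).ne' h0
  rw [dissipation, add_eq_zero_iff_of_nonneg (by positivity) (sq_nonneg _),
    mul_eq_zero_iff_left hc.ne', sq_eq_zero_iff, norm_eq_zero, sub_eq_zero, sq_eq_zero_iff]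
  refine and_congr_right ?_
  rintro (rfl : x = h u)
  simp [hQ0]

theorem continuous_gradientFeedbackField (hf : Continuous (Function.uncurry f))
    (hh : ContDiff ℝ 1 h) (hΦ : ContDiff ℝ 1 (Function.uncurry Φ)) (hQ : Continuous Q) :
    Continuous (gradientFeedbackField f h Φ Q) :=
  hf.prodMk ((hQ.comp continuous_snd).clm_apply (continuous_feedbackGradient hh hΦ)).neg

theorem continuous_dissipation (hh : ContDiff ℝ 1 h) (hΦ : ContDiff ℝ 1 (Function.uncurry Φ))
    (hQ : Continuous Q) : Continuous (dissipation h Φ Q γ ζ L q) := by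
  have := continuous_feedbackGradient hh hΦ
  have := hh.continuous
  unfold dissipation
  fun_prop

end CompositeLyapunov

section Minimizers

theorem convexOn_reducedCost {E F : Type*} [AddCommGroup E] [Module ℝ E] [AddCommGroup F]
    [Module ℝ F] {Φ : E → F → ℝ} (hΦ : ConvexOn ℝ Set.univ (Function.uncurry Φ)) (h : F →ᵃ[ℝ] E) :
    ConvexOn ℝ Set.univ fun u => Φ (h u) u :=
  hΦ.comp_affineMap (h.prod (AffineMap.id ℝ F))

theorem setOf_forall_le_eq_setOf_feedbackGradient_eq_zero {E F : Type*} [NormedAddCommGroup E]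
    [InnerProductSpace ℝ E] [CompleteSpace E] [NormedAddCommGroup F] [InnerProductSpace ℝ F]
    [CompleteSpace F] {h : F → E} {Φ : E → F → ℝ} (hh : Differentiable ℝ h)
    (hΦ : Differentiable ℝ (Function.uncurry Φ))
    (hconv : ConvexOn ℝ Set.univ fun u => Φ (h u) u) :
    {k : E × F | k.1 = h k.2 ∧ ∀ k' : E × F, k'.1 = h k'.2 → Φ k.1 k.2 ≤ Φ k'.1 k'.2} =
      {k | k.1 = h k.2 ∧ feedbackGradient h Φ (h k.2) k.2 = 0} := by
  ext ⟨x, u⟩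
  refine and_congr_right ?_
  rintro (rfl : x = h u)
  rw [← convexOn_univ_forall_le_iff_gradient_eq_zero hconv
    (hasGradientAt_reducedCost (hh u) (hΦ (h u, u)))]
  exact ⟨fun hmin w => hmin (h w, w) rfl, fun hmin k' hk' => hk' ▸ hmin k'.2⟩

end Minimizers

section Convergence

variable {E F : Type*} [NormedAddCommGroup E] [InnerProductSpace ℝ E] [FiniteDimensional ℝ E]
  [NormedAddCommGroup F] [InnerProductSpace ℝ F] [CompleteSpace F]
  {f : E → F → E} {h : F → E} {W Φ : E → F → ℝ} {Q : F → F →L[ℝ] F} {α γ ζ L q : ℝ}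

theorem tendsto_infDist_feedbackGradient_eq_zero (hα : 0 < α) (hζ : 0 < ζ) (hL : 0 < L)
    (hf : Continuous (Function.uncurry f)) (hh : ContDiff ℝ 1 h)
    (hW : Differentiable ℝ (Function.uncurry W)) (hW_lb : ∀ x u, α * ‖x - h u‖ ^ 2 ≤ W x u)
    (hW_decay : ∀ x u, ⟪gradient (fun y => W y u) x, f x u⟫ ≤ -γ * ‖x - h u‖ ^ 2)
    (hW_gradu : ∀ x u, ‖gradient (fun v => W x v) u‖ ≤ ζ * ‖x - h u‖)
    (hΦ : ContDiff ℝ 1 (Function.uncurry Φ)) (hlevel : ∀ c, IsCompact {u | Φ (h u) u ≤ c})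
    (hΦ_lip : ∀ x u, ‖feedbackGradient h Φ x u - feedbackGradient h Φ (h u) u‖ ≤ L * ‖x - h u‖)
    (hQ : Continuous Q) (hQ_symm : ∀ u, (Q u).toLinearMap.IsSymmetric)
    (hQ_pos : ∀ u v, v ≠ 0 → 0 < ⟪Q u v, v⟫) (hQq : ∀ u, ‖Q u‖ ≤ q) (hq : ζ * L * q < γ)
    {z : ℝ → E × F} (hz : ∀ t ≥ 0, HasDerivAt z (gradientFeedbackField f h Φ Q (z t)) t) :
    Tendsto (fun t => infDist (z t) {k | k.1 = h k.2 ∧ feedbackGradient h Φ (h k.2) k.2 = 0})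
      atTop (𝓝 0) := by
  have hh' := hh.differentiable one_ne_zero
  have hΦ' := hΦ.differentiable one_ne_zero
  have hQ' : ∀ u, (Q u).IsPositive := fun u =>
    isPositive_of_isSymmetric_of_inner_pos (hQ_symm u) (hQ_pos u)
  have hVc : ∀ c, IsCompact {k | compositeLyapunov h W Φ (L / ζ) k ≤ c} :=
    isCompact_sublevel_add (mul_pos (div_pos hL hζ) hα) hh.continuous (hW.continuous.const_mul _)
      (hΦ.continuous.comp (hh.continuous.prodMk continuous_id))
      (fun k => (mul_assoc _ _ _).trans_le
        (mul_le_mul_of_nonneg_left (hW_lb k.1 k.2) (div_pos hL hζ).le)) hlevel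
  simp_rw [← dissipation_eq_zero_iff hζ hL hq hQ_pos]
  exact tendsto_infDist_zeros_of_fderiv_le_neg (continuous_gradientFeedbackField hf hh hΦ hQ)
    (differentiable_compositeLyapunov hh' hW hΦ' _) hVc (continuous_dissipation hh hΦ hQ)
    (dissipation_nonneg hζ hL.le hq.le)
    (fun k => fderiv_compositeLyapunov_gradientFeedbackField_le hζ hL.le (hh' _) (hW _) (hΦ' _)
      (hW_decay _ _) (hW_gradu _ _) (hΦ_lip _ _) (hQ' _) (hQq _)) hz

theorem stmt5_general (hα : 0 < α) (hζ : 0 < ζ) (hL : 0 < L)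
    (hf : Continuous (Function.uncurry f)) (hh : ContDiff ℝ 1 h)
    (hW : Differentiable ℝ (Function.uncurry W)) (hW_lb : ∀ x u, α * ‖x - h u‖ ^ 2 ≤ W x u)
    (hW_decay : ∀ x u, ⟪gradient (fun y => W y u) x, f x u⟫ ≤ -γ * ‖x - h u‖ ^ 2)
    (hW_gradu : ∀ x u, ‖gradient (fun v => W x v) u‖ ≤ ζ * ‖x - h u‖)
    (hΦ : ContDiff ℝ 1 (Function.uncurry Φ)) (hlevel : ∀ c, IsCompact {u | Φ (h u) u ≤ c})
    (hΦ_lip : ∀ x u, ‖feedbackGradient h Φ x u - feedbackGradient h Φ (h u) u‖ ≤ L * ‖x - h u‖)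
    (hQ : Continuous Q) (hQ_symm : ∀ u, (Q u).toLinearMap.IsSymmetric)
    (hQ_pos : ∀ u v, v ≠ 0 → 0 < ⟪Q u v, v⟫) (hQq : ∀ u, ‖Q u‖ ≤ q) (hq : q < γ / (ζ * L))
    (hconv : ConvexOn ℝ Set.univ fun u => Φ (h u) u) {x : ℝ → E} {u : ℝ → F}
    (hx : ∀ t ≥ 0, HasDerivAt x (f (x t) (u t)) t)
    (hu : ∀ t ≥ 0, HasDerivAt u (-Q (u t) (feedbackGradient h Φ (x t) (u t))) t) :
    Tendsto (fun t => infDist (x t, u t)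
      {k : E × F | k.1 = h k.2 ∧ ∀ k' : E × F, k'.1 = h k'.2 → Φ k.1 k.2 ≤ Φ k'.1 k'.2})
      atTop (𝓝 0) := by
  rw [setOf_forall_le_eq_setOf_feedbackGradient_eq_zero (hh.differentiable one_ne_zero)
    (hΦ.differentiable one_ne_zero) hconv]
  exact tendsto_infDist_feedbackGradient_eq_zero hα hζ hL hf hh hW hW_lb hW_decay hW_gradu hΦ
    hlevel hΦ_lip hQ hQ_symm hQ_pos hQq ((lt_div_iff₀' (mul_pos hζ hL)).1 hq)
    fun t ht => (hx t ht).prodMk (hu t ht)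

end Convergence

/-- Under convexity of `Φ` and affinity of `h`, all trajectories of the
gradient-feedback interconnection converge to the set of global minimizers
of `min {Φ(x,u) : x = h(u)}`. -/
theorem stmt5 {n p : ℕ}
    (f : EuclideanSpace ℝ (Fin n) → EuclideanSpace ℝ (Fin p) → EuclideanSpace ℝ (Fin n))
    (h : EuclideanSpace ℝ (Fin p) → EuclideanSpace ℝ (Fin n))
    (W : EuclideanSpace ℝ (Fin n) → EuclideanSpace ℝ (Fin p) → ℝ)
    (Φ : EuclideanSpace ℝ (Fin n) → EuclideanSpace ℝ (Fin p) → ℝ)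
    (Q : EuclideanSpace ℝ (Fin p) → EuclideanSpace ℝ (Fin p) →L[ℝ] EuclideanSpace ℝ (Fin p))
    (ℓ : ℝ≥0) (α β γ ζ L : ℝ)
    (hα : 0 < α) (hβ : 0 < β) (hγ : 0 < γ) (hζ : 0 < ζ) (hL : 0 < L)
    -- plant
    (hf_smooth : ContDiff ℝ 1 (Function.uncurry f))
    (hh_diff : Differentiable ℝ h)
    (hh_lip : LipschitzWith ℓ h)
    (hsteady : ∀ u, f (h u) u = 0)
    -- Lyapunov function for the plant
    (hW_diff : Differentiable ℝ (Function.uncurry W))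
    (hW_lb : ∀ x u, α * ‖x - h u‖ ^ 2 ≤ W x u)
    (hW_ub : ∀ x u, W x u ≤ β * ‖x - h u‖ ^ 2)
    (hW_decay : ∀ x u, ⟪gradient (fun y => W y u) x, f x u⟫ ≤ -γ * ‖x - h u‖ ^ 2)
    (hW_gradu : ∀ x u, ‖gradient (fun v => W x v) u‖ ≤ ζ * ‖x - h u‖)
    -- objective
    (hΦ_smooth : ContDiff ℝ 1 (Function.uncurry Φ))
    (hlevel : ∀ c : ℝ, IsCompact {u : EuclideanSpace ℝ (Fin p) | Φ (h u) u ≤ c})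
    (hLbound : ∀ x x' u,
      ‖(ContinuousLinearMap.adjoint (fderiv ℝ h u)
            (gradient (fun y => Φ y u) x' - gradient (fun y => Φ y u) x) +
          (gradient (fun v => Φ x' v) u - gradient (fun v => Φ x v) u))‖ ≤ L * ‖x' - x‖)
    -- metric
    (hQ_lip : LocallyLipschitz Q)
    (hQ_symm : ∀ u v w, ⟪Q u v, w⟫ = ⟪v, Q u w⟫)
    (hQ_pos : ∀ u v, v ≠ 0 → 0 < ⟪Q u v, v⟫)
    (hQ_bound : ∃ q : ℝ, (∀ u, ‖Q u‖ ≤ q) ∧ q < γ / (ζ * L))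
    -- convexity of Φ and affinity of h
    (hΦ_convex : ConvexOn ℝ Set.univ (Function.uncurry Φ))
    (hh_affine : ∃ (H₀ : EuclideanSpace ℝ (Fin p) →L[ℝ] EuclideanSpace ℝ (Fin n))
      (r : EuclideanSpace ℝ (Fin n)), ∀ u, h u = H₀ u + r)
    -- a complete solution of the interconnection
    (x : ℝ → EuclideanSpace ℝ (Fin n)) (u : ℝ → EuclideanSpace ℝ (Fin p))
    (hsolx : ∀ t ≥ (0 : ℝ), HasDerivAt x (f (x t) (u t)) t)
    (hsolu : ∀ t ≥ (0 : ℝ), HasDerivAt u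
      (-(Q (u t) (ContinuousLinearMap.adjoint (fderiv ℝ h (u t))
          (gradient (fun y => Φ y (u t)) (x t)) +
        gradient (fun v => Φ (x t) v) (u t)))) t) :
    Tendsto (fun t => Metric.infDist (x t, u t)
      {q : EuclideanSpace ℝ (Fin n) × EuclideanSpace ℝ (Fin p) |
        q.1 = h q.2 ∧
        ∀ q' : EuclideanSpace ℝ (Fin n) × EuclideanSpace ℝ (Fin p),
          q'.1 = h q'.2 → Φ q.1 q.2 ≤ Φ q'.1 q'.2})
      atTop (nhds 0) := by
  obtain ⟨H₀, r, hH⟩ := hh_affine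
  obtain ⟨q, hQq, hq⟩ := hQ_bound
  obtain rfl : h = fun u => H₀ u + r := funext hH
  exact stmt5_general hα hζ hL hf_smooth.continuous (H₀.contDiff.add contDiff_const) hW_diff hW_lb
    hW_decay hW_gradu hΦ_smooth hlevel
    (fun x u => by rw [feedbackGradient_sub]; exact hLbound _ x u)
    hQ_lip.continuous hQ_symm hQ_pos hQq hq
    (convexOn_reducedCost hΦ_convex (H₀.toLinearMap.toAffineMap + AffineMap.const ℝ _ r))
    hsolx hsolu
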